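/- Let X be a Polish space, μ a Borel probability measure on X, and c : X × X → [0,∞) a continuous cost function with c(x,x) = 0 for all x ∈ X. Suppose α in the class C satisfies the transportation cost inequality α(T_c(μ,ν)) ≤ H(ν|μ) for all Borel probability measures ν on X. Then for every n ≥ 1 and every Borel probability measure ζ on X^n, n · α( T_{c^{⊕n}}(μ^{⊗n}, ζ) / n ) ≤ H(ζ|μ^{⊗n}), where c^{⊕n}((x_1,…,x_n),(y_1,…,y_n)) = c(x_1,y_1) + ⋯ + c(x_n,y_n) and μ^{⊗n} is the n-fold product measure. -/

import Mathlib

open MeasureTheory ENNReal Set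
open scoped NNReal ENNReal

noncomputable section

/-- The class 𝒞 of convex, nondecreasing, left continuous functions vanishing at 0,
extended to `ℝ≥0∞` (left continuity at `∞` encodes the convention `α ∞ = lim α`). -/
def ClassCFun (α : ℝ≥0∞ → ℝ≥0∞) : Prop :=
  Monotone α ∧ α 0 = 0 ∧
    (∀ (s t : ℝ≥0∞) (p q : ℝ≥0), p + q = 1 →
      α ((p : ℝ≥0∞) * s + (q : ℝ≥0∞) * t) ≤ (p : ℝ≥0∞) * α s + (q : ℝ≥0∞) * α t) ∧
    ∀ x : ℝ≥0∞, x ≠ 0 → α x = ⨆ y ∈ Set.Iio x, α y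

open scoped Classical in
/-- Relative entropy `H(ν|μ)`. -/
def relEntropy {X : Type*} [MeasurableSpace X] (ν μ : Measure X) : ℝ≥0∞ :=
  if ν ≪ μ ∧ Integrable (fun x => Real.log (ν.rnDeriv μ x).toReal) ν
  then ENNReal.ofReal (∫ x, Real.log (ν.rnDeriv μ x).toReal ∂ν) else ⊤

/-- Optimal transportation cost for the cost function `c`. -/
def optTransportCost {X : Type*} [MeasurableSpace X] (c : X → X → ℝ)
    (μ ν : Measure X) : ℝ≥0∞ :=
  ⨅ (π : Measure (X × X)) (_ : π.map Prod.fst = μ ∧ π.map Prod.snd = ν),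
    ∫⁻ p, ENNReal.ofReal (c p.1 p.2) ∂π

open ProbabilityTheory Filter Topology InformationTheory

lemma classC_jensen_finset {α : ℝ≥0∞ → ℝ≥0∞} (hα : ClassCFun α) (x : ℕ → ℝ≥0∞) (s : Finset ℕ) :
    ∀ w : ℕ → ℝ≥0, ∑ i ∈ s, w i ≤ 1 →
      α (∑ i ∈ s, (w i : ℝ≥0∞) * x i) ≤ ∑ i ∈ s, (w i : ℝ≥0∞) * α (x i) := by
  classical
  induction s using Finset.induction_on with
  | empty => intro w _; simp [hα.2.1]
  | insert a s ha ih =>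
    intro w hw
    rw [Finset.sum_insert ha] at hw
    rw [Finset.sum_insert ha, Finset.sum_insert ha]
    have hwa : w a ≤ 1 := le_trans (le_add_of_nonneg_right zero_le) hw
    obtain ⟨q, hq⟩ : ∃ q, w a + q = 1 := ⟨1 - w a, add_tsub_cancel_of_le hwa⟩
    have hsq : ∑ i ∈ s, w i ≤ q := by rw [← hq] at hw; exact le_of_add_le_add_left hw
    by_cases hq0 : q = 0
    · subst hq0
      have h0 : ∀ i ∈ s, w i = 0 := by
        have := le_antisymm hsq zero_le
        exact fun i hi => (Finset.sum_eq_zero_iff.1 this) i hi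
      rw [Finset.sum_eq_zero (fun i hi => by simp [h0 i hi]),
        Finset.sum_eq_zero (fun i hi => by simp [h0 i hi])]
      have hw1 : w a = 1 := by simpa using hq
      simp [hw1]
    · have key := ih (fun i => w i / q) (by
        rw [← Finset.sum_div]; exact div_le_one_of_le₀ hsq zero_le)
      have e : ∀ y : ℕ → ℝ≥0∞, (q : ℝ≥0∞) * ∑ i ∈ s, ((w i / q : ℝ≥0) : ℝ≥0∞) * y i
          = ∑ i ∈ s, (w i : ℝ≥0∞) * y i := by
        intro y
        rw [Finset.mul_sum]
        refine Finset.sum_congr rfl fun i _ => ?_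
        rw [← mul_assoc, ← ENNReal.coe_mul, mul_div_cancel₀ _ hq0]
      rw [← e x, ← e (fun i => α (x i))]
      refine (hα.2.2.1 _ _ _ _ hq).trans ?_
      gcongr
      

lemma classC_le_of_forall_lt {α : ℝ≥0∞ → ℝ≥0∞} (hα : ClassCFun α) {x r : ℝ≥0∞}
    (h : ∀ y < x, α y ≤ r) : α x ≤ r := by
  by_cases hx : x = 0
  · simp [hx, hα.2.1]
  · rw [hα.2.2.2 x hx]
    exact iSup₂_le fun y hy => h y hy

lemma classC_jensen_tsum {α : ℝ≥0∞ → ℝ≥0∞} (hα : ClassCFun α) (x w : ℕ → ℝ≥0∞)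
    (hw : ∑' i, w i ≤ 1) :
    α (∑' i, w i * x i) ≤ ∑' i, w i * α (x i) := by
  refine classC_le_of_forall_lt hα fun y hy => ?_
  rw [ENNReal.tsum_eq_iSup_sum] at hy
  obtain ⟨s, hs⟩ := lt_iSup_iff.1 hy
  have hwt : ∀ i, w i ≠ ∞ := fun i => ((ENNReal.le_tsum i).trans hw).trans_lt one_lt_top |>.ne
  have e : ∀ i, ((w i).toNNReal : ℝ≥0∞) = w i := fun i => ENNReal.coe_toNNReal (hwt i)
  have := classC_jensen_finset hα x s (fun i => (w i).toNNReal) (by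
    rw [← ENNReal.coe_le_coe]
    push_cast
    simp only [e]
    exact (ENNReal.sum_le_tsum s).trans hw)
  simp only [e] at this
  exact (hα.1 hs.le).trans (this.trans (ENNReal.sum_le_tsum s))

lemma relEntropy_eq_klDiv {X : Type*} [MeasurableSpace X] (ν μ : Measure X)
    [IsProbabilityMeasure ν] [IsProbabilityMeasure μ] : relEntropy ν μ = klDiv ν μ := by
  classical
  unfold relEntropy
  by_cases h : ν ≪ μ ∧ Integrable (fun x => Real.log (ν.rnDeriv μ x).toReal) ν
  · rw [if_pos h, klDiv_of_ac_of_integrable h.1 h.2]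
    simp [llr]
  · rw [if_neg h, eq_comm, klDiv_eq_top_iff]
    intro h1 h2
    exact h ⟨h1, h2⟩

lemma isProbabilityMeasure_of_map {A B : Type*} [MeasurableSpace A] [MeasurableSpace B]
    {π : Measure A} {f : A → B} (hf : Measurable f) {P : Measure B} [IsProbabilityMeasure P]
    (h : π.map f = P) : IsProbabilityMeasure π := by
  constructor
  have := congrArg (fun m => m univ) h
  simpa [Measure.map_apply hf MeasurableSet.univ] using this

lemma optTransportCost_le {X : Type*} [MeasurableSpace X] (c : X → X → ℝ) {P Q : Measure X}
    (π : Measure (X × X)) (h1 : π.map Prod.fst = P) (h2 : π.map Prod.snd = Q) :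
    optTransportCost c P Q ≤ ∫⁻ p, ENNReal.ofReal (c p.1 p.2) ∂π :=
  iInf₂_le π ⟨h1, h2⟩

lemma exists_coupling {X : Type*} [MeasurableSpace X] (c : X → X → ℝ) (P Q : Measure X)
    [IsProbabilityMeasure P] [IsProbabilityMeasure Q] {ε : ℝ≥0∞} (hε : ε ≠ 0) :
    ∃ π : Measure (X × X), IsProbabilityMeasure π ∧ π.map Prod.fst = P ∧ π.map Prod.snd = Q ∧
      ∫⁻ p, ENNReal.ofReal (c p.1 p.2) ∂π ≤ optTransportCost c P Q + ε := by
  by_cases hT : optTransportCost c P Q = ∞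
  · refine ⟨P.prod Q, inferInstance, ?_, ?_, by simp [hT]⟩
    · simp [Measure.map_fst_prod]
    · simp [Measure.map_snd_prod]
  · have h := ENNReal.lt_add_right hT hε
    conv_lhs at h => rw [optTransportCost]
    simp only [iInf_lt_iff] at h
    obtain ⟨π, ⟨h1, h2⟩, h3⟩ := h
    exact ⟨π, isProbabilityMeasure_of_map measurable_fst h1, h1, h2, h3.le⟩

lemma optTransportCost_map_le {A B : Type*} [MeasurableSpace A] [MeasurableSpace B]
    (cA : A → A → ℝ) (cB : B → B → ℝ) (hcB : Measurable fun p : B × B => cB p.1 p.2)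
    {e : A → B} (he : Measurable e)
    (hcc : ∀ x y, cB (e x) (e y) = cA x y) (P Q : Measure A) :
    optTransportCost cB (P.map e) (Q.map e) ≤ optTransportCost cA P Q := by
  refine le_iInf₂ fun π hπ => ?_
  refine (optTransportCost_le cB (π.map (Prod.map e e)) ?_ ?_).trans ?_
  · rw [Measure.map_map measurable_fst (by fun_prop), ← hπ.1, Measure.map_map he measurable_fst]
    rfl
  · rw [Measure.map_map measurable_snd (by fun_prop), ← hπ.2, Measure.map_map he measurable_snd]
    rfl
  · rw [lintegral_map (by fun_prop) (by fun_prop)]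
    simp [hcc]

lemma optTransportCost_lsc {E : Type*} [TopologicalSpace E] [PolishSpace E] [MeasurableSpace E]
    [BorelSpace E] (c : E → E → ℝ) (hc : Continuous fun p : E × E => c p.1 p.2)
    (hc0 : ∀ x y, 0 ≤ c x y) (P ζ : ProbabilityMeasure E) (ζs : ℕ → ProbabilityMeasure E)
    (hζ : Tendsto ζs atTop (𝓝 ζ)) (r : ℝ≥0∞)
    (h : ∀ N, optTransportCost c (P : Measure E) (ζs N : Measure E) ≤ r) :
    optTransportCost c (P : Measure E) (ζ : Measure E) ≤ r := by
  refine ENNReal.le_of_forall_pos_le_add fun ε hε _ => ?_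
  have hε' : (ε : ℝ≥0∞) ≠ 0 := by exact_mod_cast hε.ne'
  choose π hπp hπ1 hπ2 hπc using fun N =>
    exists_coupling c (P : Measure E) (ζs N : Measure E) hε'
  let pm : ℕ → ProbabilityMeasure (E × E) := fun N => ⟨π N, hπp N⟩
  let := TopologicalSpace.upgradeIsCompletelyMetrizable E
  -- tightness of the second marginals
  have hK : IsCompact (closure (insert ζ (range ζs))) := by
    rw [(hζ.isCompact_insert_range).isClosed.closure_eq]
    exact hζ.isCompact_insert_range
  have tight2 := isTightMeasureSet_of_isCompact_closure hK
  have tight1 : IsTightMeasureSet {(P : Measure E)} := isTightMeasureSet_singleton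
  rw [isTightMeasureSet_iff_exists_isCompact_measure_compl_le] at tight1 tight2
  have tight : IsTightMeasureSet {((μ : ProbabilityMeasure (E × E)) : Measure (E × E)) |
      μ ∈ range pm} := by
    rw [isTightMeasureSet_iff_exists_isCompact_measure_compl_le]
    intro δ hδ
    have hδ2 : 0 < δ / 2 := ENNReal.half_pos hδ.ne'
    obtain ⟨K1, hK1, hP1⟩ := tight1 _ hδ2
    obtain ⟨K2, hK2, hP2⟩ := tight2 _ hδ2
    refine ⟨K1 ×ˢ K2, hK1.prod hK2, ?_⟩
    rintro _ ⟨_, ⟨N, rfl⟩, rfl⟩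
    have e1 : π N (Prod.fst ⁻¹' K1ᶜ) ≤ δ / 2 := by
      rw [← Measure.map_apply measurable_fst hK1.measurableSet.compl, hπ1 N]
      exact hP1 _ rfl
    have e2 : π N (Prod.snd ⁻¹' K2ᶜ) ≤ δ / 2 := by
      rw [← Measure.map_apply measurable_snd hK2.measurableSet.compl, hπ2 N]
      exact hP2 _ ⟨ζs N, Or.inr ⟨N, rfl⟩, rfl⟩
    calc π N (K1 ×ˢ K2)ᶜ ≤ π N (Prod.fst ⁻¹' K1ᶜ ∪ Prod.snd ⁻¹' K2ᶜ) := by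
          apply measure_mono
          rintro ⟨a, b⟩ hab
          simp only [mem_compl_iff, mem_prod, not_and_or] at hab
          exact hab
      _ ≤ δ / 2 + δ / 2 := (measure_union_le _ _).trans (add_le_add e1 e2)
      _ = δ := ENNReal.add_halves δ
  have hcomp := isCompact_closure_of_isTightMeasureSet tight
  obtain ⟨plim, -, φ, hφ, hlim⟩ := hcomp.tendsto_subseq (x := pm)
    (fun n => subset_closure (mem_range_self n))
  refine (optTransportCost_le c (plim : Measure (E × E)) ?_ ?_).trans ?_
  · have h1 := ((ProbabilityMeasure.continuous_map (continuous_fst (X := E) (Y := E))).tendsto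
      plim).comp hlim
    have h2 : Tendsto (fun _ : ℕ => P) atTop (𝓝 P) := tendsto_const_nhds
    have h3 := tendsto_nhds_unique (h1.congr (fun n => by
      apply Subtype.ext
      exact hπ1 (φ n))) h2
    exact congrArg Subtype.val h3
  · have h1 := ((ProbabilityMeasure.continuous_map (continuous_snd (X := E) (Y := E))).tendsto
      plim).comp hlim
    have h2 := hζ.comp hφ.tendsto_atTop
    have h3 := tendsto_nhds_unique (h1.congr (fun n => by
      apply Subtype.ext
      exact hπ2 (φ n))) h2
    exact congrArg Subtype.val h3
  · have := lintegral_le_liminf_lintegral_of_forall_isOpen_measure_le_liminf_measure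
      (μ := (plim : Measure (E × E))) (μs := fun n => π (φ n)) hc (fun p => hc0 _ _)
      (fun G hG => ProbabilityMeasure.le_liminf_measure_open_of_tendsto hlim hG)
    refine this.trans ?_
    refine liminf_le_of_le (by isBoundedDefault) fun b hb => ?_
    obtain ⟨n, hn⟩ := hb.exists
    exact hn.trans ((hπc (φ n)).trans (by gcongr; exact h _))

lemma tsum_klDiv_le {Z : Type*} [MeasurableSpace Z] (m : Measure ℕ) [IsProbabilityMeasure m]
    (κ : Kernel ℕ Z) [IsMarkovKernel κ] (Q : Measure Z) [IsProbabilityMeasure Q] :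
    ∑' k, m {k} * klDiv (κ k) Q ≤ klDiv (m ⊗ₘ κ) (m.prod Q) := by
  by_cases hac : m ⊗ₘ κ ≪ m.prod Q
  swap
  · simp [klDiv_of_not_ac hac]
  set f := (m ⊗ₘ κ).rnDeriv (m.prod Q) with hf
  have hfm : Measurable f := Measure.measurable_rnDeriv _ _
  have key : ∀ k, m {k} ≠ 0 → κ k = Q.withDensity (fun z => f (k, z)) := by
    intro k hk
    ext s hs
    rw [withDensity_apply _ hs]
    have h1 : (m ⊗ₘ κ) ({k} ×ˢ s) = ∫⁻ p in {k} ×ˢ s, f p ∂(m.prod Q) :=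
      (Measure.setLIntegral_rnDeriv hac _).symm
    rw [Measure.compProd_apply_prod (measurableSet_singleton k) hs, ← Measure.prod_restrict,
      lintegral_prod _ hfm.aemeasurable, lintegral_singleton, lintegral_singleton, mul_comm,
      mul_comm _ (m {k})] at h1
    exact (ENNReal.mul_right_inj hk (measure_ne_top _ _)).1 h1
  rw [klDiv_eq_lintegral_klFun_of_ac hac, lintegral_prod _ (by fun_prop), lintegral_countable']
  refine ENNReal.tsum_le_tsum fun k => ?_
  by_cases hk : m {k} = 0
  · simp [hk]
  rw [mul_comm]
  gcongr
  have hkk := key k hk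
  have hac' : κ k ≪ Q := hkk ▸ withDensity_absolutelyContinuous _ _
  rw [klDiv_eq_lintegral_klFun_of_ac hac']
  refine (lintegral_congr_ae ?_).le
  have := Measure.rnDeriv_withDensity Q (f := fun z => f (k, z)) (by fun_prop)
  rw [← hkk] at this
  filter_upwards [this] with z hz
  rw [hz]

lemma optTransportCost_glue {Y Z : Type*} [MeasurableSpace Y] [MeasurableSpace Z]
    (c1 : Y → Y → ℝ) (c2 : Z → Z → ℝ)
    (hc1 : Measurable fun p : Y × Y => c1 p.1 p.2) (hc2 : Measurable fun p : Z × Z => c2 p.1 p.2)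
    (h1 : ∀ x y, 0 ≤ c1 x y) (h2 : ∀ x y, 0 ≤ c2 x y)
    (P ζ1 : Measure Y) [IsProbabilityMeasure P] [IsProbabilityMeasure ζ1]
    (Q : Measure Z) [IsProbabilityMeasure Q] (g : Y → ℕ) (hg : Measurable g)
    (κ : Kernel ℕ Z) [IsMarkovKernel κ] :
    optTransportCost (fun p q : Y × Z => c1 p.1 q.1 + c2 p.2 q.2) (P.prod Q)
        (ζ1 ⊗ₘ κ.comap g hg) ≤
      optTransportCost c1 P ζ1 + ∑' k, (ζ1.map g) {k} * optTransportCost c2 Q (κ k) := by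
  refine ENNReal.le_of_forall_pos_le_add fun ε hε _ => ?_
  have hε' : (ε : ℝ≥0∞) / 2 ≠ 0 := (ENNReal.half_pos (by exact_mod_cast hε.ne')).ne'
  obtain ⟨π1, hp1, hm1, hm1', hcost1⟩ := exists_coupling c1 P ζ1 hε'
  choose π2 hp2 hm2 hm2' hcost2 using fun k => exists_coupling c2 Q (κ k) hε'
  let K : Kernel ℕ (Z × Z) := ⟨π2, measurable_of_countable _⟩
  have hKm : IsMarkovKernel K := ⟨hp2⟩
  have hg2 : Measurable fun p : Y × Y => g p.2 := by fun_prop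
  let K' := K.comap (fun p : Y × Y => g p.2) hg2
  have hK' : ∀ p, K' p = π2 (g p.2) := fun p => rfl
  let r : (Y × Y) × (Z × Z) → (Y × Z) × (Y × Z) := fun t => ((t.1.1, t.2.1), (t.1.2, t.2.2))
  have hr : Measurable r := by fun_prop
  have hprob : IsProbabilityMeasure (ζ1.map g) := Measure.isProbabilityMeasure_map hg.aemeasurable
  refine (optTransportCost_le _ ((π1 ⊗ₘ K').map r) ?_ ?_).trans ?_
  · ext s hs
    rw [Measure.map_map measurable_fst hr, Measure.map_apply (by fun_prop) hs,
      Measure.compProd_apply ((measurable_fst.comp hr) hs), Measure.prod_apply hs, ← hm1,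
      lintegral_map (measurable_measure_prodMk_left hs) measurable_fst]
    refine lintegral_congr fun p => ?_
    rw [hK', ← hm2 (g p.2), Measure.map_apply measurable_fst (measurable_prodMk_left hs)]
    rfl
  · ext s hs
    rw [Measure.map_map measurable_snd hr, Measure.map_apply (by fun_prop) hs,
      Measure.compProd_apply ((measurable_snd.comp hr) hs), Measure.compProd_apply hs, ← hm1',
      lintegral_map (Kernel.measurable_kernel_prodMk_left hs) measurable_snd]
    refine lintegral_congr fun p => ?_
    rw [hK', Kernel.comap_apply, ← hm2' (g p.2),
      Measure.map_apply measurable_snd (measurable_prodMk_left hs)]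
    rfl
  · rw [lintegral_map (by fun_prop) hr, Measure.lintegral_compProd (by fun_prop)]
    have e : ∀ p : Y × Y, ∫⁻ b, ENNReal.ofReal (c1 (r (p, b)).1.1 (r (p, b)).2.1 +
        c2 (r (p, b)).1.2 (r (p, b)).2.2) ∂(K' p) ≤ ENNReal.ofReal (c1 p.1 p.2) +
          (optTransportCost c2 Q (κ (g p.2)) + ε / 2) := by
      intro p
      simp only [r]
      simp_rw [ENNReal.ofReal_add (h1 _ _) (h2 _ _)]
      rw [lintegral_add_left (by fun_prop), lintegral_const, measure_univ, mul_one]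
      gcongr
      exact hcost2 (g p.2)
    refine (lintegral_mono e).trans ?_
    rw [lintegral_add_left (by fun_prop)]
    have e2 : ∫⁻ p : Y × Y, (optTransportCost c2 Q (κ (g p.2)) + ε / 2) ∂π1 =
        ∑' k, (ζ1.map g) {k} * optTransportCost c2 Q (κ k) + ε / 2 := by
      have hF : Measurable fun k : ℕ => optTransportCost c2 Q (κ k) + (ε : ℝ≥0∞) / 2 :=
        measurable_of_countable _
      rw [← lintegral_map (f := fun k => optTransportCost c2 Q (κ k) + (ε : ℝ≥0∞) / 2) hF hg2]
      have : π1.map (fun p : Y × Y => g p.2) = ζ1.map g := by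
        rw [← hm1', Measure.map_map hg measurable_snd]; rfl
      rw [this, lintegral_add_right _ measurable_const, lintegral_const, measure_univ, mul_one,
        lintegral_countable']
      simp_rw [mul_comm]
    rw [e2]
    calc _ ≤ (optTransportCost c1 P ζ1 + ε / 2) +
          (∑' k, (ζ1.map g) {k} * optTransportCost c2 Q (κ k) + ε / 2) := by gcongr
      _ = _ := by
        rw [add_add_add_comm, ENNReal.add_halves]

lemma discretize_le {Y Z : Type*} [PseudoMetricSpace Y] [PseudoMetricSpace Z]
    [MeasurableSpace Y] [MeasurableSpace Z] [StandardBorelSpace Z] [Nonempty Z]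
    [OpensMeasurableSpace (Y × Z)]
    (ζ : Measure (Y × Z)) [IsProbabilityMeasure ζ] (g : Y → ℕ) (hg : Measurable g) {ε : ℝ}
    (hgε : ∀ y y', g y = g y' → dist y y' < ε) (B : Set (Y × Z)) (hB : MeasurableSet B) :
    (ζ.fst ⊗ₘ ((ζ.map (Prod.map g id)).condKernel).comap g hg) B ≤
      ζ (Metric.thickening ε B) := by
  have hGm : Measurable (Prod.map g (id : Z → Z)) := hg.prodMap measurable_id
  have : IsProbabilityMeasure (ζ.map (Prod.map g (id : Z → Z))) :=
    Measure.isProbabilityMeasure_map hGm.aemeasurable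
  have hfst : ∀ k, (ζ.map (Prod.map g (id : Z → Z))).fst {k} = ζ.fst (g ⁻¹' {k}) := by
    intro k
    rw [Measure.fst_apply (measurableSet_singleton k), Measure.map_apply hGm
      (measurable_fst (measurableSet_singleton k)), Measure.fst_apply (hg (measurableSet_singleton k))]
    rfl
  have hAm : ∀ k, MeasurableSet (g ⁻¹' {k}) := fun k => hg (measurableSet_singleton k)
  have hpart : ∀ k, ∫⁻ y in g ⁻¹' {k}, (ζ.map (Prod.map g (id : Z → Z))).condKernel (g y)
      (Prod.mk y ⁻¹' B) ∂ζ.fst ≤ ζ (Prod.fst ⁻¹' (g ⁻¹' {k}) ∩ Metric.thickening ε B) := by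
    intro k
    by_cases hk : ζ.fst (g ⁻¹' {k}) = 0
    · rw [Measure.restrict_eq_zero.2 hk]; simp
    calc _ ≤ ∫⁻ y in g ⁻¹' {k}, (ζ.fst (g ⁻¹' {k}))⁻¹ *
            ζ (Prod.fst ⁻¹' (g ⁻¹' {k}) ∩ Metric.thickening ε B) ∂ζ.fst := by
          refine setLIntegral_mono' (hAm k) fun y hy => ?_
          have hy' : g y = k := hy
          rw [hy', Measure.condKernel_apply_of_ne_zero (by rwa [hfst]), hfst]
          gcongr
          rw [Measure.map_apply hGm ((measurableSet_singleton k).prod (measurable_prodMk_left hB))]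
          apply measure_mono
          rintro ⟨y', z⟩ ⟨hy1, hz⟩
          have hy1' : g y' = k := hy1
          have hz' : (y, z) ∈ B := hz
          refine ⟨hy1', ?_⟩
          rw [Metric.mem_thickening_iff]
          refine ⟨(y, z), hz', ?_⟩
          have hd := hgε y' y (hy1'.trans hy'.symm)
          rw [Prod.dist_eq]
          simp only [dist_self]
          rw [max_eq_left dist_nonneg]
          exact hd
      _ = _ := by
          rw [setLIntegral_const, mul_comm, ← mul_assoc,
            ENNReal.mul_inv_cancel hk (measure_ne_top _ _), one_mul]
  rw [Measure.compProd_apply hB]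
  have hcover : ⋃ k, g ⁻¹' {k} = univ := by
    ext y; simp
  have hdis : Pairwise (Function.onFun Disjoint fun k => g ⁻¹' {k}) := by
    intro i j hij
    exact Disjoint.preimage _ (by simpa using hij)
  rw [← setLIntegral_univ, ← hcover, lintegral_iUnion hAm hdis]
  refine (ENNReal.tsum_le_tsum hpart).trans ?_
  rw [← measure_iUnion]
  · exact measure_mono (iUnion_subset fun k => inter_subset_right)
  · intro i j hij
    exact ((hdis hij).preimage Prod.fst).mono inter_subset_left inter_subset_left
  · intro k
    exact (measurable_fst (hAm k)).inter Metric.isOpen_thickening.measurableSet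

lemma exists_discretization (Y : Type*) [PseudoMetricSpace Y]
    [TopologicalSpace.SeparableSpace Y] [MeasurableSpace Y] [OpensMeasurableSpace Y]
    {ε : ℝ} (hε : 0 < ε) :
    ∃ g : Y → ℕ, Measurable g ∧ ∀ y y', g y = g y' → dist y y' < ε := by
  obtain ⟨A, hAm, hAb, hAd, hAc, hdis⟩ :=
    SeparableSpace.exists_measurable_partition_diam_le Y (half_pos hε)
  have hex : ∀ y, ∃ k, y ∈ A k := fun y => by
    have : y ∈ ⋃ n, A n := hAc ▸ mem_univ y
    simpa using this
  choose g hg using hex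
  refine ⟨g, ?_, ?_⟩
  · refine measurable_to_countable' fun k => ?_
    have : g ⁻¹' {k} = A k := by
      ext y
      constructor
      · intro h
        have h' : g y = k := h
        exact h' ▸ hg y
      · intro h
        by_contra hne
        exact (hdis hne).le_bot ⟨hg y, h⟩
    rw [this]; exact hAm k
  · intro y y' h
    have := Metric.dist_le_diam_of_mem (hAb (g y)) (hg y) (h ▸ hg y')
    linarith [hAd (g y)]

lemma two_factor {Y Z : Type*} [TopologicalSpace Y] [PolishSpace Y] [MeasurableSpace Y]
    [BorelSpace Y] [TopologicalSpace Z] [PolishSpace Z] [MeasurableSpace Z] [BorelSpace Z]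
    (c1 : Y → Y → ℝ) (c2 : Z → Z → ℝ)
    (hc1 : Continuous fun p : Y × Y => c1 p.1 p.2) (hc2 : Continuous fun p : Z × Z => c2 p.1 p.2)
    (h1 : ∀ x y, 0 ≤ c1 x y) (h2 : ∀ x y, 0 ≤ c2 x y)
    (P : Measure Y) [IsProbabilityMeasure P] (Q : Measure Z) [IsProbabilityMeasure Q]
    (α : ℝ≥0∞ → ℝ≥0∞) (hα : ClassCFun α) (n : ℕ) (hn : 1 ≤ n)
    (hP : ∀ ν : Measure Y, IsProbabilityMeasure ν → α (optTransportCost c1 P ν) ≤ klDiv ν P)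
    (hQ : ∀ ν : Measure Z, IsProbabilityMeasure ν →
      (n : ℝ≥0∞) * α (optTransportCost c2 Q ν / n) ≤ klDiv ν Q)
    (ζ : Measure (Y × Z)) [IsProbabilityMeasure ζ] :
    ((n + 1 : ℕ) : ℝ≥0∞) * α (optTransportCost (fun p q : Y × Z => c1 p.1 q.1 + c2 p.2 q.2)
      (P.prod Q) ζ / ((n + 1 : ℕ) : ℝ≥0∞)) ≤ klDiv ζ (P.prod Q) := by
  have hne : Nonempty (Y × Z) := nonempty_of_isProbabilityMeasure ζ
  have hneZ : Nonempty Z := hne.map Prod.snd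
  let := TopologicalSpace.upgradeIsCompletelyMetrizable Y
  let := TopologicalSpace.upgradeIsCompletelyMetrizable Z
  choose g hgm hgε using fun N : ℕ => exists_discretization Y (ε := 1 / ((N : ℝ) + 1))
    Nat.one_div_pos_of_nat
  have hGm : ∀ N, Measurable (Prod.map (g N) (id : Z → Z)) :=
    fun N => (hgm N).prodMap measurable_id
  have hpr : ∀ N, IsProbabilityMeasure (ζ.map (Prod.map (g N) (id : Z → Z))) :=
    fun N => Measure.isProbabilityMeasure_map (hGm N).aemeasurable
  let κ : ℕ → Kernel ℕ Z := fun N => (ζ.map (Prod.map (g N) (id : Z → Z))).condKernel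
  have hκ : ∀ N, IsMarkovKernel (κ N) := fun N => by dsimp only [κ]; infer_instance
  let ζs : ℕ → Measure (Y × Z) := fun N => ζ.fst ⊗ₘ (κ N).comap (g N) (hgm N)
  have hζs : ∀ N, IsProbabilityMeasure (ζs N) := fun N => by dsimp only [ζs]; infer_instance
  let ζp : ℕ → ProbabilityMeasure (Y × Z) := fun N => ⟨ζs N, hζs N⟩
  let ζ0 : ProbabilityMeasure (Y × Z) := ⟨ζ, inferInstance⟩
  let PQ : ProbabilityMeasure (Y × Z) := ⟨P.prod Q, inferInstance⟩
  have hconv : Tendsto ζp atTop (𝓝 ζ0) := by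
    refine tendsto_of_forall_isClosed_limsup_le' (μs := ζp) (μ := ζ0) fun F hF => ?_
    change limsup (fun N => ζs N F) atTop ≤ ζ F
    have hlim : Tendsto (fun N : ℕ => ζ (Metric.thickening (1 / ((N : ℝ) + 1)) F)) atTop
        (𝓝 (ζ F)) := by
      refine (tendsto_measure_thickening_of_isClosed ⟨1, one_pos, measure_ne_top _ _⟩ hF).comp ?_
      refine tendsto_nhdsWithin_iff.2 ⟨tendsto_one_div_add_atTop_nhds_zero_nat, ?_⟩
      exact Eventually.of_forall fun N => mem_Ioi.2 Nat.one_div_pos_of_nat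
    calc _ ≤ limsup (fun N : ℕ => ζ (Metric.thickening (1 / ((N : ℝ) + 1)) F)) atTop := by
          refine limsup_le_limsup (Eventually.of_forall fun N => ?_)
          exact discretize_le ζ (g N) (hgm N) (hgε N) F hF.measurableSet
      _ = ζ F := hlim.limsup_eq
  -- the inequality for the discretized measures
  have hn0 : (n : ℝ≥0∞) ≠ 0 := by exact_mod_cast (by omega : n ≠ 0)
  have hnt : (n : ℝ≥0∞) ≠ ∞ := ENNReal.natCast_ne_top n
  have hn10 : ((n + 1 : ℕ) : ℝ≥0∞) ≠ 0 := by exact_mod_cast (Nat.succ_ne_zero n)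
  have hn1t : ((n + 1 : ℕ) : ℝ≥0∞) ≠ ∞ := ENNReal.natCast_ne_top _
  have hmain : ∀ N, ((n + 1 : ℕ) : ℝ≥0∞) * α (optTransportCost
      (fun p q : Y × Z => c1 p.1 q.1 + c2 p.2 q.2) (P.prod Q) (ζs N) / ((n + 1 : ℕ) : ℝ≥0∞)) ≤
      klDiv ζ (P.prod Q) := by
    intro N
    set m := ζ.fst.map (g N) with hm
    have hmp : IsProbabilityMeasure m := Measure.isProbabilityMeasure_map (hgm N).aemeasurable
    set T1 := optTransportCost c1 P ζ.fst
    set S := ∑' k, m {k} * optTransportCost c2 Q (κ N k) with hS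
    have hglue := optTransportCost_glue c1 c2 hc1.measurable hc2.measurable h1 h2 P ζ.fst Q
      (g N) (hgm N) (κ N)
    have hfstm : (ζ.map (Prod.map (g N) (id : Z → Z))).fst = m := by
      rw [hm, Measure.fst, Measure.fst, Measure.map_map measurable_fst (hGm N),
        Measure.map_map (hgm N) measurable_fst]
      rfl
    have hζ' : m ⊗ₘ κ N = ζ.map (Prod.map (g N) (id : Z → Z)) := by
      rw [← hfstm]; exact Measure.disintegrate _ _
    -- entropy
    have hent : klDiv ζ.fst P + ∑' k, m {k} * klDiv (κ N k) Q ≤ klDiv ζ (P.prod Q) := by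
      have hch := klDiv_compProd_eq_add ζ.fst P ζ.condKernel (Kernel.const Y Q)
      rw [Measure.disintegrate, Measure.compProd_const, Measure.compProd_const] at hch
      rw [hch]
      gcongr
      refine (tsum_klDiv_le m (κ N) Q).trans ?_
      have hprod : m.prod Q = (ζ.fst.prod Q).map (Prod.map (g N) id) := by
        rw [← Measure.map_prod_map _ _ (hgm N) measurable_id, Measure.map_id]
      rw [hζ', hprod]
      exact klDiv_map_le _ _ (hGm N)
    -- Jensen
    have hmsum : ∑' k, m {k} = 1 := by
      have := lintegral_countable' (μ := m) (fun _ => (1 : ℝ≥0∞))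
      simpa using this.symm
    have hjen : (n : ℝ≥0∞) * α (S / n) ≤ ∑' k, m {k} * klDiv (κ N k) Q := by
      have hSn : S / n = ∑' k, m {k} * (optTransportCost c2 Q (κ N k) / n) := by
        rw [hS, div_eq_mul_inv, ← ENNReal.tsum_mul_right]
        simp_rw [mul_assoc, div_eq_mul_inv]
      rw [hSn]
      calc _ ≤ (n : ℝ≥0∞) * ∑' k, m {k} * α (optTransportCost c2 Q (κ N k) / n) := by
            gcongr
            exact classC_jensen_tsum hα _ _ hmsum.le
        _ = ∑' k, m {k} * (n * α (optTransportCost c2 Q (κ N k) / n)) := by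
            rw [← ENNReal.tsum_mul_left]
            simp_rw [mul_left_comm]
        _ ≤ _ := ENNReal.tsum_le_tsum fun k => by
            gcongr
            exact hQ _ inferInstance
    -- convexity
    have hconvex : ((n + 1 : ℕ) : ℝ≥0∞) * α ((T1 + S) / ((n + 1 : ℕ) : ℝ≥0∞)) ≤
        α T1 + n * α (S / n) := by
      let p : ℝ≥0 := 1 / ((n : ℝ≥0) + 1)
      let q : ℝ≥0 := n / ((n : ℝ≥0) + 1)
      have hn1' : ((n : ℝ≥0) + 1) ≠ 0 := by positivity
      have hpq : p + q = 1 := by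
        simp only [p, q]; field_simp; ring
      have hp : (p : ℝ≥0∞) = ((n + 1 : ℕ) : ℝ≥0∞)⁻¹ := by
        simp only [p]; rw [ENNReal.coe_div hn1']; simp
      have hq : (q : ℝ≥0∞) = n * ((n + 1 : ℕ) : ℝ≥0∞)⁻¹ := by
        simp only [q]; rw [ENNReal.coe_div hn1', div_eq_mul_inv]; simp
      have hcv := hα.2.2.1 T1 (S / n) p q hpq
      have e1 : (p : ℝ≥0∞) * T1 + q * (S / n) = (T1 + S) / ((n + 1 : ℕ) : ℝ≥0∞) := by
        rw [hp, hq, div_eq_mul_inv (T1 + S), add_mul, mul_comm T1, mul_right_comm,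
          ENNReal.mul_div_cancel hn0 hnt]
      rw [e1, hp, hq] at hcv
      calc _ ≤ ((n + 1 : ℕ) : ℝ≥0∞) * (((n + 1 : ℕ) : ℝ≥0∞)⁻¹ * α T1 +
            n * ((n + 1 : ℕ) : ℝ≥0∞)⁻¹ * α (S / n)) := by gcongr
        _ = (((n + 1 : ℕ) : ℝ≥0∞) * ((n + 1 : ℕ) : ℝ≥0∞)⁻¹) * α T1 +
            (((n + 1 : ℕ) : ℝ≥0∞) * ((n + 1 : ℕ) : ℝ≥0∞)⁻¹) * (n * α (S / n)) := by ring
        _ = _ := by rw [ENNReal.mul_inv_cancel hn10 hn1t, one_mul, one_mul]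
    calc _ ≤ ((n + 1 : ℕ) : ℝ≥0∞) * α ((T1 + S) / ((n + 1 : ℕ) : ℝ≥0∞)) := by
          refine mul_le_mul_right (hα.1 ?_) _
          gcongr
      _ ≤ α T1 + n * α (S / n) := hconvex
      _ ≤ klDiv ζ.fst P + ∑' k, m {k} * klDiv (κ N k) Q := by
          gcongr
          exact hP _ inferInstance
      _ ≤ _ := hent
  -- pass to the limit
  rw [mul_comm, ← ENNReal.le_div_iff_mul_le (Or.inl hn10) (Or.inl hn1t)]
  refine classC_le_of_forall_lt hα fun y hy => ?_
  by_contra hcon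
  have hcon' := not_le.1 hcon
  have hyT : y * ((n + 1 : ℕ) : ℝ≥0∞) < optTransportCost
      (fun p q : Y × Z => c1 p.1 q.1 + c2 p.2 q.2) (P.prod Q) ζ :=
    (ENNReal.lt_div_iff_mul_lt (Or.inl hn10) (Or.inl hn1t)).1 hy
  refine hyT.not_ge ?_
  refine optTransportCost_lsc _ (by fun_prop) (fun x y => add_nonneg (h1 _ _) (h2 _ _))
    PQ ζ0 ζp hconv _ fun N => ?_
  by_contra hN
  have hN' := not_le.1 hN
  have h3 := hmain N
  rw [mul_comm, ← ENNReal.le_div_iff_mul_le (Or.inl hn10) (Or.inl hn1t)] at h3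
  refine hcon ((hα.1 ?_).trans h3)
  exact ((ENNReal.le_div_iff_mul_le (Or.inl hn10) (Or.inl hn1t)).2 hN'.le)

lemma tensorization_klDiv
    {X : Type*} [TopologicalSpace X] [PolishSpace X] [MeasurableSpace X] [BorelSpace X]
    (μ : Measure X) [IsProbabilityMeasure μ]
    (c : X → X → ℝ)
    (hc : Continuous fun p : X × X => c p.1 p.2)
    (hc0 : ∀ x y, 0 ≤ c x y)
    (α : ℝ≥0∞ → ℝ≥0∞) (hα : ClassCFun α)
    (hTCI : ∀ ν : Measure X, IsProbabilityMeasure ν →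
      α (optTransportCost c μ ν) ≤ klDiv ν μ)
    (n : ℕ) (hn : 1 ≤ n) :
    ∀ ζ : Measure (Fin n → X), IsProbabilityMeasure ζ →
      (n : ℝ≥0∞) *
          α (optTransportCost (fun x y => ∑ i, c (x i) (y i))
              (Measure.pi fun _ => μ) ζ / (n : ℝ≥0∞)) ≤
        klDiv ζ (Measure.pi fun _ => μ) := by
  have hcn : ∀ n : ℕ, Continuous fun p : (Fin n → X) × (Fin n → X) =>
      ∑ i, c (p.1 i) (p.2 i) := fun n => continuous_finsetSum _ fun i _ =>
    hc.comp (g := fun p : X × X => c p.1 p.2)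
      (f := fun p : (Fin n → X) × (Fin n → X) => (p.1 i, p.2 i)) (by fun_prop)
  induction n, hn using Nat.le_induction with
  | base =>
    intro ζ hζ
    let e := MeasurableEquiv.funUnique (Fin 1) X
    have hmp : MeasurePreserving e (Measure.pi fun _ => μ) μ := measurePreserving_funUnique μ (Fin 1)
    have hζ' : IsProbabilityMeasure (ζ.map e) :=
      Measure.isProbabilityMeasure_map e.measurable.aemeasurable
    have ht := optTransportCost_map_le c (fun x y : Fin 1 → X => ∑ i, c (x i) (y i))
      (hcn 1).measurable e.symm.measurable (fun x y => by simp [e]) μ (ζ.map e)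
    rw [MeasurableEquiv.map_symm_map, (hmp.symm e).map_eq] at ht
    have hk := klDiv_map_le ζ (Measure.pi fun _ : Fin 1 => μ) e.measurable
    rw [hmp.map_eq] at hk
    simp only [Nat.cast_one, one_mul, div_one]
    exact (hα.1 ht).trans ((hTCI _ hζ').trans hk)
  | succ n hn ih =>
    intro ζ hζ
    let e := MeasurableEquiv.piFinSuccAbove (fun _ : Fin (n + 1) => X) 0
    have hmp : MeasurePreserving e (Measure.pi fun _ => μ) (μ.prod (Measure.pi fun _ => μ)) :=
      measurePreserving_piFinSuccAbove (fun _ => μ) 0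
    have hζ' : IsProbabilityMeasure (ζ.map e) :=
      Measure.isProbabilityMeasure_map e.measurable.aemeasurable
    have ht := optTransportCost_map_le
      (fun p q : X × (Fin n → X) => c p.1 q.1 + ∑ i, c (p.2 i) (q.2 i))
      (fun x y : Fin (n + 1) → X => ∑ i, c (x i) (y i))
      (hcn (n + 1)).measurable e.symm.measurable
      (fun x y => by
        rw [Fin.sum_univ_succ]
        rfl) (μ.prod (Measure.pi fun _ => μ)) (ζ.map e)
    rw [MeasurableEquiv.map_symm_map, (hmp.symm e).map_eq] at ht
    have hk := klDiv_map_le ζ (Measure.pi fun _ : Fin (n + 1) => μ) e.measurable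
    rw [hmp.map_eq] at hk
    have h2 := two_factor c (fun x y : Fin n → X => ∑ i, c (x i) (y i)) hc (hcn n) hc0
      (fun x y => Finset.sum_nonneg fun i _ => hc0 _ _) μ (Measure.pi fun _ => μ) α hα n hn
      hTCI ih (ζ.map e)
    refine le_trans ?_ (h2.trans hk)
    refine mul_le_mul_right (hα.1 ?_) _
    gcongr

/-- Tensorization of a convex TCI on the `n`-fold product space:
`n α(𝒯_{c^{⊕n}}(μ^{⊗n}, ζ)/n) ≤ H(ζ|μ^{⊗n})`. -/
theorem tensorization_TCI_power
    {X : Type*} [TopologicalSpace X] [PolishSpace X] [MeasurableSpace X] [BorelSpace X]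
    (μ : Measure X) [IsProbabilityMeasure μ]
    (c : X → X → ℝ)
    (hc : Continuous fun p : X × X => c p.1 p.2)
    (hc0 : ∀ x y, 0 ≤ c x y)
    (hcdiag : ∀ x, c x x = 0)
    (α : ℝ≥0∞ → ℝ≥0∞) (hα : ClassCFun α)
    (hTCI : ∀ ν : Measure X, IsProbabilityMeasure ν →
      α (optTransportCost c μ ν) ≤ relEntropy ν μ)
    (n : ℕ) (hn : 1 ≤ n) :
    ∀ ζ : Measure (Fin n → X), IsProbabilityMeasure ζ →
      (n : ℝ≥0∞) *
          α (optTransportCost (fun x y => ∑ i, c (x i) (y i))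
              (Measure.pi fun _ => μ) ζ / (n : ℝ≥0∞)) ≤
        relEntropy ζ (Measure.pi fun _ => μ) := by
  intro ζ hζ
  rw [relEntropy_eq_klDiv]
  refine tensorization_klDiv μ c hc hc0 α hα (fun ν hν => ?_) n hn ζ hζ
  rw [← relEntropy_eq_klDiv]
  exact hTCI ν hν

end
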